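/- arXiv:0810.1619 — 8 statements merged into one kernel-verified Lean document; each statement's English description precedes it below -/
import Mathlib

section
/- Let Λ be a non-ordinary numerical semigroup with enumeration λ, and let λ_{i_1} < λ_{i_2} < ⋯ < λ_{i_n} be the generators of Λ that are greater than or equal to its conductor. Then for each j with 1 ≤ j ≤ n, the set Λ \ {λ_{i_j}} is a numerical semigroup, and the set of generators of Λ \ {λ_{i_j}} that are greater than or equal to the conductor of Λ \ {λ_{i_j}} is either {λ_{i_{j+1}}, …, λ_{i_n}} or {λ_{i_{j+1}}, …, λ_{i_n}, λ_{i_j} + λ_1}. -/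
/-! Write `m = λ₁` and `T = Λ \ {x}`. Since `Λ` is not ordinary, `m < c ≤ x` for the conductor `c`,
so `m` survives in `T`, and the conductor of `T` is `x + 1`. A generator of `Λ` above `x` remains
a generator of `T`. Conversely, let `y > x` be a generator of `T` which decomposes in `Λ`; every
decomposition must involve `x`, say `y = x + b` with `b ≥ m`. If `b > m`, then
`y = m + (x + b - m)` with `x + b - m > x` is a decomposition inside `T`, which is impossible; hence
`y = x + m`. So `x + m` is the only possible new generator, and the two cases of the theorem
record whether it is a generator of `T`. -/

/-- A numerical semigroup: a subset of ℕ containing 0, closed under addition,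
with finite complement. -/
def IsNumericalSemigroup (S : Set ℕ) : Prop :=
  0 ∈ S ∧ (∀ a ∈ S, ∀ b ∈ S, a + b ∈ S) ∧ Sᶜ.Finite

/-- The conductor: the smallest `c` such that every `n ≥ c` belongs to `S`. -/
noncomputable def nsConductor (S : Set ℕ) : ℕ :=
  sInf {c : ℕ | ∀ n : ℕ, c ≤ n → n ∈ S}

/-- The genus: the number of gaps. -/
noncomputable def nsGenus (S : Set ℕ) : ℕ := Sᶜ.ncard

/-- The enumeration of `S`: the unique increasing bijection `ℕ → S`,
`λ_0 = 0 < λ_1 < λ_2 < ⋯`. -/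
noncomputable def nsEnum (S : Set ℕ) : ℕ → ℕ := Nat.nth (· ∈ S)

/-- A generator: a nonzero element that is not a sum of two nonzero elements. -/
def IsGenerator (S : Set ℕ) (x : ℕ) : Prop :=
  x ∈ S ∧ x ≠ 0 ∧ ¬ ∃ a ∈ S, ∃ b ∈ S, a ≠ 0 ∧ b ≠ 0 ∧ a + b = x

/-- An ordinary numerical semigroup: `{0} ∪ [c, ∞)`. -/
def IsOrdinary (S : Set ℕ) : Prop := S = {0} ∪ Set.Ici (nsConductor S)

/-- An effective generator: a generator that is ≥ the conductor. -/
def IsEffectiveGenerator (S : Set ℕ) (x : ℕ) : Prop :=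
  IsGenerator S x ∧ nsConductor S ≤ x

/-- A strong generator: an effective generator `x` such that `x + λ₁` is a
generator of `S \ {x}`. -/
def IsStrongGenerator (S : Set ℕ) (x : ℕ) : Prop :=
  IsEffectiveGenerator S x ∧ IsGenerator (S \ {x}) (x + nsEnum S 1)

/-- The Frobenius number: the largest gap. -/
noncomputable def nsFrobenius (S : Set ℕ) : ℕ := sSup Sᶜ

/-- An infinite chain of numerical semigroups: `Λ_0 = ℕ` and each `Λ_i` is
obtained from `Λ_{i+1}` by adjoining its Frobenius number. -/
def IsInfiniteChain (L : ℕ → Set ℕ) : Prop :=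
  (∀ i, IsNumericalSemigroup (L i)) ∧ L 0 = Set.univ ∧
  ∀ i, L (i + 1) ≠ Set.univ ∧ L i = L (i + 1) ∪ {nsFrobenius (L (i + 1))}

/-- `T` is a descendant of `S`: `T ⊆ S` and they agree below the conductor of `S`. -/
def IsDescendant (S T : Set ℕ) : Prop :=
  IsNumericalSemigroup T ∧ T ⊆ S ∧
  T ∩ Set.Iio (nsConductor S) = S ∩ Set.Iio (nsConductor S)

lemma mem_of_nsConductor_le {S : Set ℕ} (hS : IsNumericalSemigroup S) {n : ℕ}
    (hn : nsConductor S ≤ n) : n ∈ S := by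
  have hne : {c : ℕ | ∀ n : ℕ, c ≤ n → n ∈ S}.Nonempty := by
    obtain ⟨b, hb⟩ := hS.2.2.bddAbove
    refine ⟨b + 1, fun n hn => ?_⟩
    by_contra h
    have := hb (show n ∈ Sᶜ from h)
    omega
  exact Nat.sInf_mem hne n hn

lemma nsConductor_diff_singleton {S : Set ℕ} (hS : IsNumericalSemigroup S) {x : ℕ}
    (hx : nsConductor S ≤ x) : nsConductor (S \ {x}) = x + 1 := by
  have hmem : x + 1 ∈ {c : ℕ | ∀ n : ℕ, c ≤ n → n ∈ S \ {x}} := by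
    intro n hn
    refine ⟨mem_of_nsConductor_le hS (by omega), ?_⟩
    simp only [Set.mem_singleton_iff]
    omega
  refine le_antisymm (Nat.sInf_le hmem) (le_csInf ⟨_, hmem⟩ fun c hc => ?_)
  by_contra h
  exact (hc x (by omega)).2 rfl

/-- `λ₁` is the multiplicity: the least nonzero element of the semigroup. -/
lemma isLeast_nsEnum_one {S : Set ℕ} (hS : IsNumericalSemigroup S) :
    IsLeast {a | a ∈ S ∧ a ≠ 0} (nsEnum S 1) := by
  classical
  have hinf : {a | a ∈ S}.Infinite := Set.infinite_of_finite_compl hS.2.2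
  refine ⟨⟨Nat.nth_mem_of_infinite hinf 1, ?_⟩, fun a ⟨ha, ha0⟩ => ?_⟩
  · have : Nat.nth (· ∈ S) 0 < Nat.nth (· ∈ S) 1 := Nat.nth_strictMono hinf one_pos
    exact (Nat.zero_le _).trans_lt this |>.ne'
  · have hc : 1 ≤ Nat.count (· ∈ S) a := by
      have h1 : Nat.count (· ∈ S) 1 = 1 := by simp [Nat.count_succ, hS.1]
      calc 1 = Nat.count (· ∈ S) 1 := h1.symm
        _ ≤ _ := Nat.count_monotone _ (Nat.one_le_iff_ne_zero.2 ha0)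
    calc nsEnum S 1 ≤ Nat.nth (· ∈ S) (Nat.count (· ∈ S) a) :=
          (Nat.nth_strictMono hinf).monotone hc
      _ = a := Nat.nth_count ha

lemma nsEnum_one_lt_nsConductor {S : Set ℕ} (hS : IsNumericalSemigroup S)
    (hord : ¬ IsOrdinary S) : nsEnum S 1 < nsConductor S := by
  by_contra! h
  refine hord (Set.Subset.antisymm (fun a ha => ?_) ?_)
  · rcases eq_or_ne a 0 with rfl | ha0
    · exact Or.inl rfl
    · exact Or.inr (h.trans ((isLeast_nsEnum_one hS).2 ⟨ha, ha0⟩))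
  · rintro a (rfl | ha)
    · exact hS.1
    · exact mem_of_nsConductor_le hS ha

lemma IsGenerator.isNumericalSemigroup_diff {S : Set ℕ} (hS : IsNumericalSemigroup S) {x : ℕ}
    (hx : IsGenerator S x) : IsNumericalSemigroup (S \ {x}) := by
  refine ⟨⟨hS.1, fun h => hx.2.1 h.symm⟩, ?_, ?_⟩
  · rintro a ⟨ha, hax⟩ b ⟨hb, hbx⟩
    refine ⟨hS.2.1 a ha b hb, fun h => ?_⟩
    simp only [Set.mem_singleton_iff] at hax hbx h
    exact hx.2.2 ⟨a, ha, b, hb, by omega, by omega, h⟩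
  · rw [Set.sdiff_eq, Set.compl_inter, compl_compl]
    exact hS.2.2.union (Set.finite_singleton x)

/-- The only decomposable element of `S` that can become a generator beyond `x` after removing `x`
is `x + λ₁`: any other `x + b` is rewritten as `λ₁ + (x + b - λ₁)`. -/
lemma isGenerator_or_eq_add {S : Set ℕ} (hS : IsNumericalSemigroup S) {x y : ℕ}
    (hx : nsConductor S ≤ x) (hm : nsEnum S 1 < x) (hy : IsGenerator (S \ {x}) y) :
    IsGenerator S y ∨ y = x + nsEnum S 1 := by
  obtain ⟨⟨hmS, hm0⟩, hleast⟩ := isLeast_nsEnum_one hS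
  have key : ∀ b ∈ S, b ≠ 0 → x + b = y → y = x + nsEnum S 1 := by
    intro b hb hb0 hby
    have hmb : nsEnum S 1 ≤ b := hleast ⟨hb, hb0⟩
    by_contra hne
    refine hy.2.2 ⟨nsEnum S 1, ⟨hmS, ?_⟩, x + b - nsEnum S 1,
      ⟨mem_of_nsConductor_le hS (by omega), ?_⟩, hm0, by omega, by omega⟩ <;>
    · simp only [Set.mem_singleton_iff]
      omega
  by_contra! h
  refine h.1 ⟨hy.1.1, hy.2.1, ?_⟩
  rintro ⟨a, ha, b, hb, ha0, hb0, hab⟩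
  by_cases hax : a = x
  · exact h.2 (key b hb hb0 (hax ▸ hab))
  by_cases hbx : b = x
  · exact h.2 (key a ha ha0 (by omega))
  exact hy.2.2 ⟨a, ⟨ha, hax⟩, b, ⟨hb, hbx⟩, ha0, hb0, hab⟩

lemma IsGenerator.diff_singleton {S : Set ℕ} {x y : ℕ} (hy : IsGenerator S y) (hxy : y ≠ x) :
    IsGenerator (S \ {x}) y :=
  ⟨⟨hy.1, hxy⟩, hy.2.1, fun ⟨a, ha, b, hb, h⟩ => hy.2.2 ⟨a, ha.1, b, hb.1, h⟩⟩

/-- Removing an effective generator `x` from a non-ordinary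
numerical semigroup `Λ` yields a numerical semigroup whose set of generators
`≥` its conductor is either the set of effective generators of `Λ` larger than
`x`, or that set together with `x + λ₁`. -/
theorem stmt_0 (S : Set ℕ) (hS : IsNumericalSemigroup S) (hord : ¬ IsOrdinary S)
    (x : ℕ) (hx : IsEffectiveGenerator S x) :
    IsNumericalSemigroup (S \ {x}) ∧
    ({y : ℕ | IsGenerator (S \ {x}) y ∧ nsConductor (S \ {x}) ≤ y} =
        {y : ℕ | IsEffectiveGenerator S y ∧ x < y} ∨
      {y : ℕ | IsGenerator (S \ {x}) y ∧ nsConductor (S \ {x}) ≤ y} =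
        {y : ℕ | IsEffectiveGenerator S y ∧ x < y} ∪ {x + nsEnum S 1}) := by
  have hm : nsEnum S 1 < x := (nsEnum_one_lt_nsConductor hS hord).trans_le hx.2
  have hm0 : nsEnum S 1 ≠ 0 := (isLeast_nsEnum_one hS).1.2
  refine ⟨hx.1.isNumericalSemigroup_diff hS, ?_⟩
  rw [nsConductor_diff_singleton hS hx.2]
  by_cases hg : IsGenerator (S \ {x}) (x + nsEnum S 1)
  · right
    ext y
    constructor
    · rintro ⟨hy, hxy⟩
      rcases isGenerator_or_eq_add hS hx.2 hm hy with h | h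
      · exact Or.inl ⟨⟨h, hx.2.trans (by omega)⟩, hxy⟩
      · exact Or.inr h
    · rintro (⟨hy, hxy⟩ | rfl)
      · exact ⟨hy.1.diff_singleton hxy.ne', hxy⟩
      · exact ⟨hg, by omega⟩
  · left
    ext y
    constructor
    · rintro ⟨hy, hxy⟩
      rcases isGenerator_or_eq_add hS hx.2 hm hy with h | h
      · exact ⟨⟨h, hx.2.trans (by omega)⟩, hxy⟩
      · exact absurd (h ▸ hy) hg
    · rintro ⟨hy, hxy⟩
      exact ⟨hy.1.diff_singleton hxy.ne', hxy⟩
end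

section
/- For every integer g ≥ 5, the pseudo-symmetric numerical semigroup Λ_{ps_g} = {0, g, g+1, …, 2g−3} ∪ [2g−1, ∞) has exactly one effective generator, namely its conductor c = 2g−1, and this effective generator is weak. In particular, Λ_{ps_g} is a stick. -/
/-- For `g ≥ 5`, the pseudo-symmetric numerical semigroup
`Λ_{ps_g} = {0, g, …, 2g-3} ∪ [2g-1, ∞)` has exactly one effective generator,
namely its conductor `c = 2g-1`, and this effective generator is weak; in
particular, it is a stick. -/
theorem stmt_6 (g : ℕ) (hg : 5 ≤ g) (S : Set ℕ)
    (hS : S = {0} ∪ Set.Icc g (2 * g - 3) ∪ Set.Ici (2 * g - 1)) :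
    IsNumericalSemigroup S ∧
    nsConductor S = 2 * g - 1 ∧
    {x : ℕ | IsEffectiveGenerator S x} = {nsConductor S} ∧
    ¬ IsStrongGenerator S (nsConductor S) := by
  have hm : ∀ x, x ∈ S ↔ x = 0 ∨ (g ≤ x ∧ x ≤ 2 * g - 3) ∨ 2 * g - 1 ≤ x := by
    intro x
    simp [hS, or_assoc]
  have hc : nsConductor S = 2 * g - 1 := by
    apply IsLeast.csInf_eq
    refine ⟨fun n hn => (hm n).2 (by omega), fun c hcS => ?_⟩
    by_contra hlt
    -- a bound below `2g - 1` would put the gap `2g - 2` in `S`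
    have h := (hm _).1 (hcS (2 * g - 2) (by omega))
    omega
  have he : nsEnum S 1 = g := by
    classical
    have h1 : Nat.count (· ∈ S) g = 1 := by
      rw [Nat.count_eq_card_filter_range, Finset.card_eq_one]
      refine ⟨0, ?_⟩
      ext x
      simp only [Finset.mem_filter, Finset.mem_range, Finset.mem_singleton, hm]
      omega
    have h2 := Nat.nth_count (p := (· ∈ S)) ((hm g).2 (by omega))
    rw [h1] at h2
    exact h2
  refine ⟨⟨(hm 0).2 (by omega), fun a ha b hb => ?_, ?_⟩, hc, ?_, ?_⟩
  · rw [hm] at *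
    omega
  · refine (Set.finite_lt_nat (2 * g - 1)).subset fun x hx => ?_
    have h : ¬ x ∈ S := hx
    rw [hm] at h
    change x < 2 * g - 1
    omega
  · ext x
    rw [hc]
    simp only [Set.mem_ofPred_eq, Set.mem_singleton_iff, IsEffectiveGenerator, hc]
    constructor
    · rintro ⟨⟨-, -, hx⟩, hle⟩
      by_contra hne
      apply hx
      by_cases h : x = 3 * g - 2
      · exact ⟨g + 1, (hm _).2 (by omega), 2 * g - 3, (hm _).2 (by omega),
          by omega, by omega, by omega⟩
      · exact ⟨g, (hm _).2 (by omega), x - g, (hm _).2 (by omega),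
          by omega, by omega, by omega⟩
    · rintro rfl
      refine ⟨⟨(hm _).2 (by omega), by omega, ?_⟩, le_rfl⟩
      rintro ⟨a, ha, b, hb, ha0, hb0, hab⟩
      rw [hm] at ha hb
      omega
  · rw [hc]
    rintro ⟨-, -, -, h⟩
    rw [he] at h
    refine h ⟨g + 2, ⟨(hm _).2 (by omega), ?_⟩, 2 * g - 3, ⟨(hm _).2 (by omega), ?_⟩,
      by omega, by omega, by omega⟩ <;>
    · rw [Set.mem_singleton_iff]
      omega
end

section
/- Let Λ be a pseudo-symmetric numerical semigroup with smallest nonzero element λ_1 = 3 and genus g ≥ 5, and let c be its conductor. Then Λ has exactly one effective generator, namely c + 2, and this effective generator is weak. -/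
/-- A numerical semigroup containing `3` is described by the two parameters `p`, `q` of its Apéry set
`{0, 3p + 1, 3q + 2}` with respect to `3`. -/
theorem exists_mem_iff (S : Set ℕ) (hS : IsNumericalSemigroup S) (h3 : 3 ∈ S) :
    ∃ p q : ℕ, ∀ n, n ∈ S ↔
      n % 3 = 0 ∨ (n % 3 = 1 ∧ 3 * p + 1 ≤ n) ∨ (n % 3 = 2 ∧ 3 * q + 2 ≤ n) := by
  classical
  obtain ⟨h0, hadd, hfin⟩ := hS
  have hmul : ∀ a ∈ S, ∀ k : ℕ, a + 3 * k ∈ S := by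
    intro a ha k
    induction k with
    | zero => simpa using ha
    | succ k ih => exact hadd _ ih _ h3
  have hclass : ∀ r : ℕ, ∃ k, 3 * k + r ∈ S := by
    intro r
    by_contra! h
    have hinj : Function.Injective fun k : ℕ => 3 * k + r := fun a b hab => by
      simp only at hab
      omega
    exact Set.infinite_of_injective_forall_mem hinj (s := Sᶜ) h hfin
  have hleast : ∀ r : ℕ, ∃ p, ∀ k, 3 * k + r ∈ S ↔ p ≤ k := by
    intro r
    refine ⟨Nat.find (hclass r), fun k => ⟨fun hk => Nat.find_min' _ hk, fun hk => ?_⟩⟩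
    have h := hmul _ (Nat.find_spec (hclass r)) (k - Nat.find (hclass r))
    convert h using 1
    omega
  obtain ⟨p, hp⟩ := hleast 1
  obtain ⟨q, hq⟩ := hleast 2
  refine ⟨p, q, fun n => ?_⟩
  obtain h | h | h : n % 3 = 0 ∨ n % 3 = 1 ∨ n % 3 = 2 := by omega
  · have h' := hmul 0 h0 (n / 3)
    rw [show 0 + 3 * (n / 3) = n by omega] at h'
    simp [h, h']
  · have h' := hp (n / 3)
    rw [show 3 * (n / 3) + 1 = n by omega] at h'
    rw [h']
    omega
  · have h' := hq (n / 3)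
    rw [show 3 * (n / 3) + 2 = n by omega] at h'
    rw [h']
    omega

theorem genus_eq (S : Set ℕ) (p q : ℕ)
    (h : ∀ n, n ∈ S ↔
      n % 3 = 0 ∨ (n % 3 = 1 ∧ 3 * p + 1 ≤ n) ∨ (n % 3 = 2 ∧ 3 * q + 2 ≤ n)) :
    nsGenus S = p + q := by
  have hc : Sᶜ = (((Finset.range p).image (fun i => 3 * i + 1) ∪
      (Finset.range q).image (fun i => 3 * i + 2) : Finset ℕ) : Set ℕ) := by
    ext n
    simp only [Set.mem_compl_iff, h, Finset.coe_union, Finset.coe_image, Finset.coe_range,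
      Set.mem_union, Set.mem_image, Set.mem_Iio]
    constructor
    · intro hn
      obtain h1 | h2 : n % 3 = 1 ∨ n % 3 = 2 := by omega
      · exact Or.inl ⟨n / 3, by omega, by omega⟩
      · exact Or.inr ⟨n / 3, by omega, by omega⟩
    · rintro (⟨i, hi, rfl⟩ | ⟨i, hi, rfl⟩) <;> omega
  rw [nsGenus, hc, Set.ncard_coe_finset, Finset.card_union_of_disjoint,
    Finset.card_image_of_injective, Finset.card_image_of_injective, Finset.card_range,
    Finset.card_range]
  · intro a b hab
    simp only at hab
    omega
  · intro a b hab
    simp only at hab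
    omega
  · rw [Finset.disjoint_left]
    intro n hn hn'
    simp only [Finset.mem_image] at hn hn'
    obtain ⟨i, -, rfl⟩ := hn
    obtain ⟨j, -, hj⟩ := hn'
    omega

/-- A pseudo-symmetric numerical semigroup with smallest nonzero
element `λ_1 = 3` and genus `g ≥ 5` has exactly one effective generator, namely
`c + 2`, and this effective generator is weak. -/
theorem stmt_8 (S : Set ℕ) (hS : IsNumericalSemigroup S)
    (hps : nsConductor S + 1 = 2 * nsGenus S)
    (h1 : nsEnum S 1 = 3) (hg : 5 ≤ nsGenus S) :
    {x : ℕ | IsEffectiveGenerator S x} = {nsConductor S + 2} ∧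
    ¬ IsStrongGenerator S (nsConductor S + 2) := by
  have hinf : S.Infinite := by
    have h := hS.2.2.infinite_compl
    rwa [compl_compl] at h
  have h3 : 3 ∈ S := by
    rw [← h1]
    exact Nat.nth_mem_of_infinite (p := (· ∈ S)) hinf 1
  obtain ⟨p, q, hmem⟩ := exists_mem_iff S hS h3
  have hpq := genus_eq S p q hmem
  have hne : {c : ℕ | ∀ n : ℕ, c ≤ n → n ∈ S}.Nonempty :=
    ⟨3 * p + 3 * q + 2, fun n hn => (hmem n).2 (by omega)⟩
  have hge : ∀ n, nsConductor S ≤ n → n ∈ S := Nat.sInf_mem hne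
  have hF : nsConductor S - 1 ∉ S := by
    intro hF
    have hle : nsConductor S ≤ nsConductor S - 1 := Nat.sInf_le fun n hn => by
      obtain rfl | hn' := hn.eq_or_lt
      · exact hF
      · exact hge n (by omega)
    omega
  unfold IsStrongGenerator
  simp only [IsEffectiveGenerator, IsGenerator, h1]
  generalize nsConductor S = c at *
  generalize nsGenus S = g at *
  have hc0 := (hmem c).1 (hge c le_rfl)
  have hc1 := (hmem (c + 1)).1 (hge _ (by omega))
  have hc2 := (hmem (c + 2)).1 (hge _ (by omega))
  rw [hmem] at hF
  -- The smaller and larger nonzero Apéry elements are `g + 2` and `2g + 1`.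
  have key : (3 * p + 1 = 2 * g + 1 ∧ 3 * q + 2 = g + 2) ∨
      (3 * q + 2 = 2 * g + 1 ∧ 3 * p + 1 = g + 2) := by omega
  constructor
  · ext x
    simp only [Set.mem_ofPred_eq, Set.mem_singleton_iff]
    constructor
    · rintro ⟨⟨-, -, hx⟩, hcx⟩
      by_contra hne'
      exact hx ⟨3, h3, x - 3, (hmem _).2 (by omega), by omega, by omega, by omega⟩
    · rintro rfl
      refine ⟨⟨hge _ (by omega), by omega, ?_⟩, by omega⟩
      rintro ⟨a, ha, b, hb, ha0, hb0, hab⟩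
      rw [hmem] at ha hb
      omega
  · rintro ⟨-, -, -, h⟩
    have hm : g + 2 ∈ S \ {c + 2} := ⟨(hmem _).2 (by omega), by
      rw [Set.mem_singleton_iff]
      omega⟩
    exact h ⟨g + 2, hm, g + 2, hm, by omega, by omega, by omega⟩
end

section
/- Let Λ be a pseudo-symmetric numerical semigroup with smallest nonzero element λ_1 ≠ 3 such that the nonzero elements of Λ smaller than the conductor c split into more than one maximal interval of consecutive integers (i.e., there exists a nonzero i ∈ Λ with i + 1 < c, i + 1 ∉ Λ, and some element of Λ strictly between i + 1 and c). Then Λ has no generator greater than or equal to c; that is, Λ is a leaf. -/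
/-- The pairing behind pseudo-symmetry: a gap `n ≤ F = 2h` other than `h` is the mirror image of
an element of `S`. Reflection maps `S ∩ [0, F]` injectively into the gaps other than `h`, and
the two sets have the same cardinality. -/
theorem mem_sub_of_not_mem (S : Set ℕ) (h : ℕ)
    (hadd : ∀ a ∈ S, ∀ b ∈ S, a + b ∈ S) (hF : 2 * h ∉ S) (hbig : ∀ n, 2 * h < n → n ∈ S)
    (hg : Sᶜ.ncard = h + 1) {n : ℕ} (hn : n ∉ S) (hnF : n ≤ 2 * h) (hnh : n ≠ h) :
    2 * h - n ∈ S := by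
  classical
  have hhS : h ∉ S := fun hh => hF (two_mul h ▸ hadd h hh h hh)
  set A := (Finset.range (2 * h + 1)).filter (· ∈ S) with hA
  set B := (Finset.range (2 * h + 1)).filter (· ∉ S) with hB
  have hBS : (B : Set ℕ) = Sᶜ := by
    ext y
    simp only [hB, Finset.coe_filter, Finset.mem_range, Set.mem_ofPred_eq, Set.mem_compl_iff]
    refine ⟨fun hy => hy.2, fun hy => ⟨?_, hy⟩⟩
    by_contra hlt
    exact hy (hbig y (by omega))
  have hBc : B.card = h + 1 := by rw [← hg, ← hBS, Set.ncard_coe_finset]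
  have hAB : A.card + B.card = 2 * h + 1 := by
    simpa using Finset.card_filter_add_card_filter_not (s := Finset.range (2 * h + 1)) (· ∈ S)
  have hsub : A.image (2 * h - ·) ⊆ B.erase h := by
    intro y hy
    simp only [hA, hB, Finset.mem_image, Finset.mem_filter, Finset.mem_range,
      Finset.mem_erase] at hy ⊢
    obtain ⟨a, ⟨ha, haS⟩, rfl⟩ := hy
    refine ⟨fun he => hhS ?_, by omega, fun hy => hF ?_⟩
    · rwa [show h = a by omega]
    · have := hadd a haS _ hy
      rwa [show a + (2 * h - a) = 2 * h by omega] at this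
  have hinj : (A.image (2 * h - ·)).card = A.card := by
    refine Finset.card_image_of_injOn fun a ha b hb hab => ?_
    simp only [hA, Finset.coe_filter, Finset.mem_range, Set.mem_ofPred_eq] at ha hb hab
    omega
  have hhB : h ∈ B := by
    simp only [hB, Finset.mem_filter, Finset.mem_range]
    exact ⟨by omega, hhS⟩
  have heq : A.image (2 * h - ·) = B.erase h := by
    refine Finset.eq_of_subset_of_card_le hsub ?_
    rw [Finset.card_erase_of_mem hhB, hinj]
    omega
  have hnB : n ∈ B.erase h := by
    simp only [hB, Finset.mem_erase, Finset.mem_filter, Finset.mem_range]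
    exact ⟨hnh, by omega, hn⟩
  rw [← heq, Finset.mem_image] at hnB
  obtain ⟨a, ha, rfl⟩ := hnB
  simp only [hA, Finset.mem_filter, Finset.mem_range] at ha
  rw [show 2 * h - (2 * h - a) = a by omega]
  exact ha.2

/-- If subtracting `m` from an element of `S` below `x` stays in `S` with the single exception of
`h + m`, then all elements of `S` below `x` are congruent to `0` or `h` modulo `m`. -/
theorem dvd_or_dvd_of_sub_mem (S : Set ℕ) (m h x : ℕ) (hm : 0 < m)
    (hmin : ∀ s ∈ S, s ≠ 0 → m ≤ s)
    (hsub : ∀ s ∈ S, m ≤ s → s < x → s ≠ h + m → s - m ∈ S) :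
    ∀ s ∈ S, s < x → (m : ℤ) ∣ s ∨ (m : ℤ) ∣ (s : ℤ) - h := by
  intro s
  induction s using Nat.strong_induction_on with
  | _ s ih =>
    intro hs hsx
    by_cases h0 : s = 0
    · simp [h0]
    have hms := hmin s hs h0
    by_cases he : s = h + m
    · right; simp [he]
    rcases ih (s - m) (by omega) (hsub s hs hms hsx he) (by omega) with hd | hd
    · left
      rw [Nat.cast_sub hms] at hd
      simpa using hd.add (dvd_refl (m : ℤ))
    · right
      rw [Nat.cast_sub hms] at hd
      have := hd.add (dvd_refl (m : ℤ))
      rwa [show (s : ℤ) - m - h + m = s - h by ring] at this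

/-- `λ₁` is the smallest nonzero element of `S`. -/
theorem nsEnum_one_spec (S : Set ℕ) (h0 : 0 ∈ S) (hinf : S.Infinite) :
    nsEnum S 1 ∈ S ∧ 0 < nsEnum S 1 ∧ ∀ s ∈ S, s ≠ 0 → nsEnum S 1 ≤ s := by
  have hinf' : (Set.ofPred (· ∈ S)).Infinite := hinf
  have hz : Nat.nth (· ∈ S) 0 = 0 := Nat.nth_zero_of_zero h0
  refine ⟨Nat.nth_mem_of_infinite hinf' 1, ?_, fun s hs hs0 => ?_⟩
  · have := Nat.nth_strictMono hinf' Nat.zero_lt_one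
    unfold nsEnum
    omega
  · by_contra! hlt
    have := Nat.le_nth_of_lt_nth_succ (p := (· ∈ S)) (k := 0) hlt hs
    omega

/-- A pseudo-symmetric numerical semigroup with `λ_1 ≠ 3` whose
nonzero elements smaller than the conductor split into more than one maximal
interval has no generator `≥` its conductor, i.e. it is a leaf. -/
theorem stmt_9 (S : Set ℕ) (hS : IsNumericalSemigroup S)
    (hps : nsConductor S + 1 = 2 * nsGenus S)
    (h1 : nsEnum S 1 ≠ 3)
    (hint : ∃ i ∈ S, i ≠ 0 ∧ i + 1 < nsConductor S ∧ i + 1 ∉ S ∧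
      ∃ j ∈ S, i + 1 < j ∧ j < nsConductor S) :
    ∀ x : ℕ, IsGenerator S x → x < nsConductor S := by
  obtain ⟨h0, hadd, hfin⟩ := hS
  have hinf : S.Infinite := by
    have := hfin.infinite_compl
    rwa [compl_compl] at this
  obtain ⟨hmS, hmpos, hmin⟩ := nsEnum_one_spec S h0 hinf
  have hbdd : {c : ℕ | ∀ n : ℕ, c ≤ n → n ∈ S}.Nonempty := by
    obtain ⟨b, hb⟩ := hfin.bddAbove
    refine ⟨b + 1, fun n hn => ?_⟩
    by_contra hnS
    have := hb hnS
    omega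
  have hc : ∀ n, nsConductor S ≤ n → n ∈ S := Nat.sInf_mem hbdd
  have hcmin : ∀ c', (∀ n, c' ≤ n → n ∈ S) → nsConductor S ≤ c' := fun c' h' => Nat.sInf_le h'
  obtain ⟨i, hiS, hi0, hic, hi1, j, hjS, hij, hjc⟩ := hint
  obtain ⟨h, hg⟩ : ∃ h, nsGenus S = h + 1 := ⟨nsGenus S - 1, by omega⟩
  have hcon : nsConductor S = 2 * h + 1 := by omega
  rw [hcon] at hc hcmin hic hjc ⊢
  set m := nsEnum S 1 with hm
  have hF : 2 * h ∉ S := by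
    intro hF
    have := hcmin (2 * h) fun n hn => by
      rcases hn.eq_or_lt with rfl | hn
      · exact hF
      · exact hc n hn
    omega
  have hpair : ∀ n, n ∉ S → n ≤ 2 * h → n ≠ h → 2 * h - n ∈ S := fun n a b d =>
    mem_sub_of_not_mem S h hadd hF hc hg a b d
  intro x ⟨hxS, hx0, hxg⟩
  by_contra! hx
  obtain ⟨k, rfl⟩ : ∃ k, x = 2 * h + k := ⟨x - 2 * h, by omega⟩
  have hgap : ∀ s ∈ S, s ≠ 0 → s < 2 * h + k → 2 * h + k - s ∉ S := fun s hs hs0 hsx hd =>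
    hxg ⟨s, hs, _, hd, hs0, by omega, by omega⟩
  have hmi := hmin i hiS hi0
  -- The mirror image of the gap `x - s` is `s - k`.
  have hsub : ∀ s ∈ S, s ≠ 0 → k ≤ s → s < 2 * h + k → s ≠ h + k → s - k ∈ S := by
    intro s hs hs0 hks hsx hne
    have := hpair _ (hgap s hs hs0 hsx) (by omega) (by omega)
    rwa [show 2 * h - (2 * h + k - s) = s - k by omega] at this
  have hkm : k ≤ m := by
    by_contra! hlt
    exact hgap m hmS (by omega) (by omega) (hc _ (by omega))
  rcases hkm.eq_or_lt with rfl | hkm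
  · have hm2 : ¬ m ∣ 2 * h := by
      rintro ⟨t, ht⟩
      have hmul : ∀ t, m * t ∈ S := by
        intro t
        induction t with
        | zero => simpa using h0
        | succ t ih => rw [Nat.mul_succ]; exact hadd _ ih _ hmS
      exact hF (ht ▸ hmul t)
    have h4 : 4 ≤ m := by
      by_contra! hlt
      have : m = 1 ∨ m = 2 := by omega
      rcases this with h' | h' <;> rw [h'] at hm2 <;> simp at hm2
    have key := dvd_or_dvd_of_sub_mem S m h (2 * h + m) hmpos hmin
      fun s hs hms hsx hne => hsub s hs (by omega) hms hsx hne
    have k1 := key (2 * h + 1) (hc _ (by omega)) (by omega)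
    have k2 := key (2 * h + 2) (hc _ (by omega)) (by omega)
    have k3 := key (2 * h + 3) (hc _ (by omega)) (by omega)
    -- Two of the three consecutive numbers are congruent modulo `m ≥ 4`.
    have small : ∀ a b : ℤ, (m : ℤ) ∣ a → (m : ℤ) ∣ b → 0 < b - a → b - a < 4 → False :=
      fun a b ha hb hpos hlt => by
        have := Int.le_of_dvd hpos (hb.sub ha)
        omega
    rcases k1 with k1 | k1 <;> rcases k2 with k2 | k2
    · exact small _ _ k1 k2 (by push_cast; omega) (by push_cast; omega)
    · rcases k3 with k3 | k3
      · exact small _ _ k1 k3 (by push_cast; omega) (by push_cast; omega)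
      · exact small _ _ k2 k3 (by push_cast; omega) (by push_cast; omega)
    · rcases k3 with k3 | k3
      · exact small _ _ k2 k3 (by push_cast; omega) (by push_cast; omega)
      · exact small _ _ k1 k3 (by push_cast; omega) (by push_cast; omega)
    · exact small _ _ k1 k2 (by push_cast; omega) (by push_cast; omega)
  · have hmh : m = h + k := by
      by_contra hne
      have := hmin _ (hsub m hmS (by omega) hkm.le (by omega) hne) (by omega)
      omega
    -- The mirror image of the gap `i + 1` would be a nonzero element of `S` below `m`.
    have := hmin _ (hpair (i + 1) hi1 (by omega) (by omega)) (by omega)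
    omega
end

section
/- Let Λ be an Arf numerical semigroup different from ℕ with smallest nonzero element λ_1 ≥ 3 (i.e., Λ is not hyperelliptic and not trivial). Then Λ has at least two generators greater than or equal to its conductor; that is, Λ is a bush. -/
/-- `Λ` is Arf: `λ_i + λ_j - λ_k ∈ Λ` whenever `i ≥ j ≥ k`. -/
def IsArf (S : Set ℕ) : Prop :=
  ∀ x ∈ S, ∀ y ∈ S, ∀ z ∈ S, z ≤ y → y ≤ x → x + y - z ∈ S

/-- If `m` is the multiplicity of an Arf semigroup, a gap plus `m` is never a sum of two nonzero
elements, because subtracting `m` from such a sum stays in the semigroup. -/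
lemma isGenerator_gap_add {S : Set ℕ} (hArf : IsArf S) {m y : ℕ} (hm : m ∈ S) (hm0 : m ≠ 0)
    (hmin : ∀ a ∈ S, a ≠ 0 → m ≤ a) (hy : y ∉ S) (hym : y + m ∈ S) :
    IsGenerator S (y + m) := by
  refine ⟨hym, by omega, ?_⟩
  rintro ⟨a, ha, b, hb, ha0, hb0, hab⟩
  apply hy
  rcases le_total a b with h | h
  · have := hArf b hb a ha m hm (hmin a ha ha0) h
    rwa [show b + a - m = y by omega] at this
  · have := hArf a ha b hb m hm (hmin b hb hb0) h
    rwa [show a + b - m = y by omega] at this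

/-- An Arf numerical semigroup different from ℕ with smallest
nonzero element `λ_1 ≥ 3` has at least two generators greater than or equal to
its conductor, i.e. it is a bush. -/
theorem stmt_10 (S : Set ℕ) (hS : IsNumericalSemigroup S) (hArf : IsArf S)
    (hne : S ≠ Set.univ) (h1 : 3 ≤ nsEnum S 1) :
    ∃ x y : ℕ, x ≠ y ∧
      (IsGenerator S x ∧ nsConductor S ≤ x) ∧
      (IsGenerator S y ∧ nsConductor S ≤ y) := by
  obtain ⟨h0, -, hfin⟩ := hS
  have hinf : (setOf (· ∈ S)).Infinite := by
    have := hfin.infinite_compl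
    rwa [compl_compl] at this
  have hm : nsEnum S 1 ∈ S := Nat.nth_mem_of_infinite hinf 1
  have hmin : ∀ a ∈ S, a ≠ 0 → nsEnum S 1 ≤ a := by
    intro a ha ha0
    classical
    have hz : Nat.nth (· ∈ S) 0 = 0 := Nat.nth_zero_of_zero h0
    obtain ⟨n, hn⟩ : ∃ n, Nat.nth (· ∈ S) n = a := ⟨_, Nat.nth_count (p := (· ∈ S)) ha⟩
    rw [← hn]
    have : n ≠ 0 := by
      rintro rfl
      exact ha0 (hn.symm.trans hz)
    exact (Nat.nth_le_nth hinf).2 (by omega)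
  have hc : ∀ n, nsConductor S ≤ n → n ∈ S := by
    have hex : {c : ℕ | ∀ n : ℕ, c ≤ n → n ∈ S}.Nonempty := by
      obtain ⟨b, hb⟩ := hfin.bddAbove
      refine ⟨b + 1, fun n hn => ?_⟩
      by_contra h
      have := hb h
      omega
    exact Nat.sInf_mem hex
  generalize nsEnum S 1 = m at *
  have hpred : m - 1 ∉ S := fun h => by
    have := hmin _ h (by omega)
    omega
  have hcm : m ≤ nsConductor S := by
    by_contra h
    exact hpred (hc _ (by omega))
  have hF : nsConductor S - 1 ∉ S := by
    intro h
    have : nsConductor S ≤ nsConductor S - 1 := Nat.sInf_le fun n hn => by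
      rcases eq_or_lt_of_le hn with rfl | h'
      · exact h
      · exact hc n (by omega)
    omega
  generalize nsConductor S = c at *
  have key : ∀ y, y ∉ S → c ≤ y + m → IsGenerator S (y + m) ∧ c ≤ y + m := fun y hy hle =>
    ⟨isGenerator_gap_add hArf hm (by omega) hmin hy (hc _ hle), hle⟩
  by_cases h2 : c - 2 ∈ S
  · have h3 : c - 3 ∉ S := by
      intro h3
      have := hArf _ h2 _ h2 _ h3 (by omega) le_rfl
      rw [show c - 2 + (c - 2) - (c - 3) = c - 1 by omega] at this
      exact hF this
    exact ⟨c - 1 + m, c - 3 + m, by omega, key _ hF (by omega), key _ h3 (by omega)⟩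
  · exact ⟨c - 1 + m, c - 2 + m, by omega, key _ hF (by omega), key _ h2 (by omega)⟩
end

section
/- Let Λ be a numerical semigroup with genus g and conductor c, and suppose the greatest common divisor of the elements of Λ smaller than c equals 1. Let Λ' be the numerical semigroup generated by the elements of Λ smaller than c (all finite sums of such elements). Then Λ' is a descendant of Λ, every descendant of Λ contains Λ', and consequently Λ' is the unique descendant of Λ of largest genus. -/
theorem closure_subset_of_isNumericalSemigroup {T A : Set ℕ} (hT : IsNumericalSemigroup T)
    (hA : A ⊆ T) : (AddSubmonoid.closure A : Set ℕ) ⊆ T := by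
  intro x hx
  induction hx using AddSubmonoid.closure_induction with
  | mem x hx => exact hA hx
  | zero => exact hT.1
  | add x y _ _ hx hy => exact hT.2.1 x hx y hy

/-- If the gcd of the elements of `Λ` smaller than its conductor
equals `1`, then the numerical semigroup `Λ'` generated by those elements is a
descendant of `Λ`, every descendant of `Λ` contains `Λ'`, and `Λ'` is the unique
descendant of `Λ` of largest genus. -/
theorem stmt_14 (S : Set ℕ) (hS : IsNumericalSemigroup S)
    (hgcd : ∀ e : ℕ, (∀ x ∈ S, x < nsConductor S → e ∣ x) → e = 1)
    (S' : Set ℕ)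
    (hS' : S' = {x : ℕ | x ∈ AddSubmonoid.closure (S ∩ Set.Iio (nsConductor S))}) :
    IsDescendant S S' ∧
    (∀ T : Set ℕ, IsDescendant S T → S' ⊆ T) ∧
    (∀ T : Set ℕ, IsDescendant S T →
      nsGenus T ≤ nsGenus S' ∧ (nsGenus T = nsGenus S' → T = S')) := by
  obtain rfl : S' = (AddSubmonoid.closure (S ∩ Set.Iio (nsConductor S)) : Set ℕ) :=
    hS'.trans (by ext; simp)
  clear hS'
  have hcofin : ((AddSubmonoid.closure (S ∩ Set.Iio (nsConductor S)) : Set ℕ)ᶜ).Finite := by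
    have hg : Nat.setGcd (S ∩ Set.Iio (nsConductor S)) = 1 :=
      hgcd _ fun x hx hlt => Nat.setGcd_dvd_of_mem ⟨hx, hlt⟩
    obtain ⟨n, hn⟩ := Nat.exists_mem_closure_of_ge (S ∩ Set.Iio (nsConductor S))
    refine (Set.finite_Iio n).subset fun m hm => ?_
    by_contra hlt
    exact hm (hn m (not_lt.mp hlt) (hg ▸ one_dvd m))
  have hsub := closure_subset_of_isNumericalSemigroup hS
    (A := S ∩ Set.Iio (nsConductor S)) Set.inter_subset_left
  have hmin : ∀ T : Set ℕ, IsDescendant S T →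
      (AddSubmonoid.closure (S ∩ Set.Iio (nsConductor S)) : Set ℕ) ⊆ T := fun T hT =>
    closure_subset_of_isNumericalSemigroup hT.1 (hT.2.2 ▸ Set.inter_subset_left)
  refine ⟨⟨⟨zero_mem _, fun _ ha _ hb => AddSubmonoid.add_mem _ ha hb, hcofin⟩, hsub, ?_⟩, hmin, fun T hT => ?_⟩
  · exact Set.Subset.antisymm (Set.inter_subset_inter_left _ hsub)
      fun x hx => ⟨AddSubmonoid.subset_closure hx, hx.2⟩
  · have hc := Set.compl_subset_compl.mpr (hmin T hT)
    exact ⟨Set.ncard_le_ncard hc hcofin, fun h =>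
      compl_injective (Set.eq_of_subset_of_ncard_le hc h.ge hcofin)⟩
end

section
/- Let Λ be a non-ordinary numerical semigroup with genus g and conductor c, and let d be the greatest common divisor of the elements of Λ smaller than c. If d > 1 and d is not prime, then there are infinitely many distinct infinite chains containing Λ. -/
open Classical in
/-- The chain attached to `M ⊆ ℕ`: its `i`-th term is the complement of the set of the first `i`
gaps of `M`, a gap `x` being among them when fewer than `i` gaps lie below `x`. -/
noncomputable def chainOf (M : Set ℕ) (i : ℕ) : Set ℕ :=
  {x | x ∈ M ∨ i ≤ Nat.count (· ∉ M) x}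

open Classical in
theorem isInfiniteChain_chainOf (M : Set ℕ) (h0 : 0 ∈ M) (hadd : ∀ a ∈ M, ∀ b ∈ M, a + b ∈ M)
    (hinf : {x | x ∉ M}.Infinite) : IsInfiniteChain (chainOf M) := by
  -- every gap of `chainOf M (i + 1)` is at most the gap of index `i` of `M`
  have hle : ∀ i x, x ∉ chainOf M (i + 1) → x ≤ Nat.nth (· ∉ M) i := by
    intro i x hx
    simp only [chainOf, Set.mem_ofPred_eq, not_or, not_le] at hx
    by_contra! hlt
    have h1 := Nat.count_strict_mono (p := (· ∉ M)) (Nat.nth_mem_of_infinite hinf i) hlt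
    rw [Nat.count_nth_of_infinite hinf] at h1
    omega
  have hnth : ∀ i, Nat.nth (· ∉ M) i ∉ chainOf M (i + 1) := by
    intro i
    simp only [chainOf, Set.mem_ofPred_eq, not_or, not_le]
    refine ⟨Nat.nth_mem_of_infinite hinf i, ?_⟩
    rw [Nat.count_nth_of_infinite hinf]
    omega
  have hfrob : ∀ i, nsFrobenius (chainOf M (i + 1)) = Nat.nth (· ∉ M) i := fun i =>
    IsGreatest.csSup_eq ⟨hnth i, fun x hx => hle i x hx⟩
  have hzero : chainOf M 0 = Set.univ := by
    ext x; simp [chainOf]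
  refine ⟨fun i => ⟨Or.inl h0, ?_, ?_⟩, hzero, fun i => ⟨?_, ?_⟩⟩
  · rintro x hx y hy
    rcases hx with hx | hx
    · rcases hy with hy | hy
      · exact Or.inl (hadd x hx y hy)
      · exact Or.inr (hy.trans (Nat.count_monotone _ (Nat.le_add_left y x)))
    · exact Or.inr (hx.trans (Nat.count_monotone _ (Nat.le_add_right x y)))
  · cases i with
    | zero => simp [hzero]
    | succ i => exact (Set.finite_Iic (Nat.nth (· ∉ M) i)).subset fun x hx => hle i x hx
  · intro h
    exact hnth i (h ▸ Set.mem_univ _)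
  · rw [hfrob]
    ext x
    simp only [chainOf, Set.mem_union, Set.mem_ofPred_eq, Set.mem_singleton_iff]
    constructor
    · rintro (h | h)
      · exact Or.inl (Or.inl h)
      · by_cases hx : x ∈ M
        · exact Or.inl (Or.inl hx)
        · rcases h.eq_or_lt with h | h
          · right
            rw [h]
            exact (Nat.nth_count (p := (· ∉ M)) hx).symm
          · exact Or.inl (Or.inr h)
    · rintro ((h | h) | h)
      · exact Or.inl h
      · exact Or.inr (by omega)
      · right
        rw [h, Nat.count_nth_of_infinite hinf]

/-- A chain determines the set it comes from, as the intersection of its terms. -/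
theorem chainOf_injective : Function.Injective chainOf := by
  classical
  have key : ∀ M : Set ℕ, M = ⋂ i, chainOf M i := by
    intro M
    ext x
    simp only [chainOf, Set.mem_iInter, Set.mem_ofPred_eq]
    refine ⟨fun h _ => Or.inl h, fun h => ?_⟩
    rcases h (Nat.count (· ∉ M) x + 1) with h | h
    · exact h
    · omega
  intro M N h
  rw [key M, key N, h]

theorem exists_chainOf_eq (S M : Set ℕ) (c : ℕ) (hc : ∀ n, c ≤ n → n ∈ S) (hMS : M ⊆ S)
    (hSM : ∀ x ∈ S, x < c → x ∈ M) : ∃ i, chainOf M i = S := by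
  classical
  refine ⟨Nat.count (· ∉ M) c, ?_⟩
  ext x
  constructor
  · intro h
    by_cases hx : x ∈ M
    · exact hMS hx
    · have h := h.resolve_left hx
      apply hc
      by_contra! hlt
      have := Nat.count_strict_mono (p := (· ∉ M)) hx hlt
      omega
  · intro h
    rcases lt_or_ge x c with hx | hx
    · exact Or.inl (hSM x h hx)
    · exact Or.inr (Nat.count_monotone _ hx)

/-- The elements of `S` that are multiples of `d`, or multiples of `a` from `k` on. -/
def thickening (S : Set ℕ) (d a k : ℕ) : Set ℕ :=
  {x | x ∈ S ∧ (d ∣ x ∨ (a ∣ x ∧ k ≤ x))}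

theorem thickening_add_mem (S : Set ℕ) (hS : ∀ a ∈ S, ∀ b ∈ S, a + b ∈ S) (d a k : ℕ)
    (had : a ∣ d) : ∀ x ∈ thickening S d a k, ∀ y ∈ thickening S d a k,
      x + y ∈ thickening S d a k := by
  rintro x ⟨hxS, hx⟩ y ⟨hyS, hy⟩
  refine ⟨hS x hxS y hyS, ?_⟩
  rcases hx with hx | ⟨hx, hkx⟩
  · rcases hy with hy | ⟨hy, hky⟩
    · exact Or.inl (dvd_add hx hy)
    · exact Or.inr ⟨dvd_add (had.trans hx) hy, by omega⟩
  · rcases hy with hy | ⟨hy, hky⟩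
    · exact Or.inr ⟨dvd_add hx (had.trans hy), by omega⟩
    · exact Or.inr ⟨dvd_add hx hy, by omega⟩

theorem thickening_compl_infinite (S : Set ℕ) (d a k : ℕ) (had : a ∣ d) (ha : 1 < a) :
    {x | x ∉ thickening S d a k}.Infinite := by
  -- no integer `a * m + 1` is a multiple of `a`
  refine Set.infinite_of_injective_forall_mem (f := fun m : ℕ => a * m + 1) ?_ ?_
  · intro m n h
    have h : a * m + 1 = a * n + 1 := h
    exact Nat.eq_of_mul_eq_mul_left (by omega) (Nat.add_right_cancel h)
  · rintro m ⟨-, h⟩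
    have h : a ∣ a * m + 1 := h.elim had.trans And.left
    have h1 : a ∣ 1 := (Nat.dvd_add_right (Dvd.intro m rfl)).1 h
    have := Nat.dvd_one.1 h1
    omega

theorem thickening_injective (S : Set ℕ) (c d a : ℕ) (hc : ∀ n, c ≤ n → n ∈ S) (had : a ∣ d)
    (ha : 1 < a) (hlt : a < d) :
    Function.Injective fun n => thickening S d a (a + d * (n + c)) := by
  have hnd : ∀ m, ¬ d ∣ a + d * m := fun m h =>
    Nat.not_dvd_of_pos_of_lt (by omega) hlt ((Nat.dvd_add_left (Dvd.intro m rfl)).1 h)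
  -- `k = a + d * (n + c)` is the least element of its set that is not a multiple of `d`
  have key : ∀ n m, thickening S d a (a + d * (n + c)) =
      thickening S d a (a + d * (m + c)) → m ≤ n := by
    intro n m h
    have hmem : a + d * (n + c) ∈ thickening S d a (a + d * (n + c)) :=
      ⟨hc _ (by nlinarith), Or.inr ⟨(Nat.dvd_add_right dvd_rfl).2 (had.mul_right _), le_rfl⟩⟩
    rw [h] at hmem
    have h2 := (hmem.2.resolve_left (hnd _)).2
    have h3 : m + c ≤ n + c := Nat.le_of_mul_le_mul_left (by omega) (by omega : 0 < d)
    omega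
  exact fun n m h => le_antisymm (key m n h.symm) (key n m h)

/-- If the gcd `d` of the elements of a non-ordinary numerical
semigroup smaller than its conductor is `> 1` and not prime, then there are
infinitely many distinct infinite chains containing the semigroup. -/
theorem stmt_15 (S : Set ℕ) (hS : IsNumericalSemigroup S) (hord : ¬ IsOrdinary S)
    (d : ℕ)
    (hdiv : ∀ x ∈ S, x < nsConductor S → d ∣ x)
    (hgcd : ∀ e : ℕ, (∀ x ∈ S, x < nsConductor S → e ∣ x) → e ∣ d)
    (hd1 : 1 < d) (hdp : ¬ d.Prime) :
    {L : ℕ → Set ℕ | IsInfiniteChain L ∧ ∃ i : ℕ, L i = S}.Infinite := by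
  obtain ⟨a, had, ha, hlt⟩ := Nat.exists_dvd_of_not_prime2 hd1 hdp
  obtain ⟨h0, hadd, hfin⟩ := hS
  -- the infimum defining the conductor is attained, since `S` has finitely many gaps
  have hc : ∀ n, nsConductor S ≤ n → n ∈ S := by
    refine Nat.sInf_mem (s := {c : ℕ | ∀ n : ℕ, c ≤ n → n ∈ S}) ?_
    obtain ⟨B, hB⟩ := hfin.bddAbove
    refine ⟨B + 1, fun n hn => ?_⟩
    by_contra h
    have := hB h
    omega
  refine Set.infinite_of_injective_forall_mem
    (chainOf_injective.comp (thickening_injective S _ d a hc had (by omega) hlt)) fun n => ⟨?_, ?_⟩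
  · exact isInfiniteChain_chainOf _ ⟨h0, Or.inl (dvd_zero d)⟩
      (thickening_add_mem S hadd d a _ had) (thickening_compl_infinite S d a _ had (by omega))
  · exact exists_chainOf_eq S _ _ hc (fun x hx => hx.1) fun x hx hlt => ⟨hx, Or.inl (hdiv x hx hlt)⟩
end

section
/- Let l ≥ 2 be an integer and let L_l be a finite multiset of nonnegative integers consisting of one copy of l − 1, one copy of l + 1, and an arbitrary finite multiset of integers ≤ l − 2 (possibly with repetitions). For k > l define recursively the multiset L_k = {k+1} ⊎ (⊎_{m ∈ L_{k−1}} {0, 1, …, m−1}) with one copy of the element k − 2 removed. Then for every k ≥ 2l, the cardinality (counted with multiplicity) of L_k equals 2F_k, where F denotes the Fibonacci sequence with F_1 = F_2 = 1; in particular |L_k| = |L_{k−1}| + |L_{k−2}| for all k ≥ 2l + 2. -/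
/-!
An element `m` of `L s` has `choose m j` descendants `j` steps later, since these correspond to
the chains `m > m₁ > ⋯ > m_j ≥ 0`. So one follows the weights `W L j = ∑_{m ∈ L} choose m j`:
`W L 0` is the cardinality of `L`, replacing each `m` by `{0, …, m-1}` shifts `j` to `j + 1`
(hockey-stick identity), and the recursion becomes the linear relation
`W (L k) j + choose (k-2) j = choose (k+1) j + W (L (k-1)) (j+1)`.

The shifted diagonal sums `G k j = ∑_{p+i=k} choose p (j+i)` satisfy
`G (k+1) j = choose (k+1) j + G k (j+1)`, so `W (L k) j + G (k-2) j = G (k+1) j` propagates in `k`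
once it holds for `k = l` and `j ≥ l`. There all binomials vanish except `choose (l+1) j`: this is
where the arbitrary part of `L l` dies out and where the threshold `2 * l` comes from.
At `j = 0` the diagonal sums are Fibonacci numbers, and `F_{k+2} - F_{k-1} = 2 F_k`.
-/

/-- The number of `j`-th generation descendants of the elements of `s`, when the children of `m`
are `0, …, m-1`. -/
def descWeight (s : Multiset ℕ) (j : ℕ) : ℕ := (s.map fun m => m.choose j).sum

/-- The diagonal sum of binomial coefficients `∑_{p+i=k} choose p (j+i)`, with lower index shifted
by `j`. -/
def diagSum (k j : ℕ) : ℕ := ∑ p ∈ Finset.HasAntidiagonal.antidiagonal k, p.1.choose (j + p.2)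

theorem descWeight_cons (a : ℕ) (s : Multiset ℕ) (j : ℕ) :
    descWeight (a ::ₘ s) j = a.choose j + descWeight s j := by
  simp [descWeight]

theorem descWeight_zero (s : Multiset ℕ) : descWeight s 0 = s.card := by
  simp [descWeight]

theorem descWeight_erase {a : ℕ} {s : Multiset ℕ} (h : a ∈ s) (j : ℕ) :
    descWeight (s.erase a) j + a.choose j = descWeight s j := by
  conv_rhs => rw [← Multiset.cons_erase h, descWeight_cons]
  omega

theorem descWeight_eq_zero {s : Multiset ℕ} {j : ℕ} (h : ∀ m ∈ s, m < j) :
    descWeight s j = 0 := by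
  refine Multiset.sum_eq_zero fun x hx => ?_
  obtain ⟨m, hm, rfl⟩ := Multiset.mem_map.1 hx
  exact Nat.choose_eq_zero_of_lt (h m hm)

theorem descWeight_range (m j : ℕ) : descWeight (Multiset.range m) j = m.choose (j + 1) := by
  induction m with
  | zero => simp [descWeight]
  | succ m ih => rw [Multiset.range_succ, descWeight_cons, ih, Nat.choose_succ_succ]

theorem descWeight_bind_range (s : Multiset ℕ) (j : ℕ) :
    descWeight (s.bind fun m => Multiset.range m) j = descWeight s (j + 1) := by
  induction s using Multiset.induction_on with
  | empty => simp [descWeight]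
  | cons a s ih =>
    rw [Multiset.cons_bind, descWeight_cons, ← ih, ← descWeight_range]
    simp [descWeight]

theorem diagSum_succ (k j : ℕ) :
    diagSum (k + 1) j = (k + 1).choose j + diagSum k (j + 1) := by
  rw [diagSum, Finset.Nat.sum_antidiagonal_succ', diagSum]
  simp only [add_zero, add_comm, add_left_comm]

theorem diagSum_eq_zero {k j : ℕ} (h : k < j) : diagSum k j = 0 := by
  refine Finset.sum_eq_zero fun p hp => Nat.choose_eq_zero_of_lt ?_
  have := Finset.HasAntidiagonal.mem_antidiagonal.1 hp
  omega

theorem diagSum_zero (k : ℕ) : diagSum k 0 = Nat.fib (k + 1) := by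
  simp [diagSum, Nat.fib_succ_eq_sum_choose]

/-- Let `l ≥ 2` and let `L l` be a multiset consisting of one copy
of `l - 1`, one copy of `l + 1`, and an arbitrary finite multiset of integers
`≤ l - 2`. For `k > l`, `L k` is obtained as the multiset union of `{k+1}` with
`{0, 1, …, m-1}` for each `m ∈ L (k-1)` (with multiplicity), with one copy of
`k - 2` removed. Then for all `k ≥ 2l`, `|L k| = 2 F_k` where `F` is the
Fibonacci sequence (`F_1 = F_2 = 1`); in particular
`|L k| = |L (k-1)| + |L (k-2)|` for all `k ≥ 2l + 2`. -/
theorem stmt_19 (l : ℕ) (hl : 2 ≤ l) (L : ℕ → Multiset ℕ)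
    (hbase : ∃ M : Multiset ℕ, (∀ m ∈ M, m ≤ l - 2) ∧
      L l = (l - 1) ::ₘ (l + 1) ::ₘ M)
    (hrec : ∀ k : ℕ, l < k →
      L k = (((k + 1) ::ₘ (L (k - 1)).bind (fun m => Multiset.range m)).erase
        (k - 2))) :
    (∀ k : ℕ, 2 * l ≤ k → Multiset.card (L k) = 2 * Nat.fib k) ∧
    (∀ k : ℕ, 2 * l + 2 ≤ k →
      Multiset.card (L k) = Multiset.card (L (k - 1)) + Multiset.card (L (k - 2))) := by
  obtain ⟨M, hM, hL⟩ := hbase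
  -- The largest element `k + 1` of `L k` guarantees that the erased element is really present.
  have htop : ∀ k, l ≤ k → k + 1 ∈ L k := by
    intro k hk
    rcases hk.eq_or_lt with rfl | hk
    · simp [hL]
    · rw [hrec k hk, Multiset.mem_erase_of_ne (by omega)]
      exact Multiset.mem_cons_self _ _
  have hstep : ∀ k j, l ≤ k →
      descWeight (L (k + 1)) j + (k - 1).choose j =
        (k + 2).choose j + descWeight (L k) (j + 1) := by
    intro k j hk
    have hmem : k - 1 ∈ (k + 2) ::ₘ (L k).bind fun m => Multiset.range m :=
      Multiset.mem_cons_of_mem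
        (Multiset.mem_bind.2 ⟨k + 1, htop k hk, Multiset.mem_range.2 (by omega)⟩)
    have h := descWeight_erase hmem j
    rw [descWeight_cons, descWeight_bind_range] at h
    rw [hrec (k + 1) (by omega)]
    exact h
  have hinv : ∀ k, l ≤ k → ∀ j, 2 * l ≤ k + j →
      descWeight (L k) j + diagSum (k - 2) j = diagSum (k + 1) j := by
    intro k hk
    induction k, hk using Nat.le_induction with
    | base =>
      intro j hj
      have hMj : descWeight M j = 0 := descWeight_eq_zero fun m hm => by
        have := hM m hm
        omega
      rw [hL, descWeight_cons, descWeight_cons, hMj, diagSum_succ,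
        diagSum_eq_zero (show l - 2 < j by omega), diagSum_eq_zero (show l < j + 1 by omega),
        Nat.choose_eq_zero_of_lt (show l - 1 < j by omega)]
      omega
    | succ k hk ih =>
      intro j hj
      have h₁ := hstep k j hk
      have h₂ := ih (j + 1) (by omega)
      have h₃ := diagSum_succ (k + 1) j
      have h₄ := diagSum_succ (k - 2) j
      rw [show k - 2 + 1 = k - 1 by omega] at h₄
      rw [show k + 1 - 2 = k - 1 by omega]
      rw [show k + 1 + 1 = k + 2 by omega] at h₃ ⊢
      omega
  have hcard : ∀ k, 2 * l ≤ k → Multiset.card (L k) = 2 * Nat.fib k := by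
    intro k hk
    have h := hinv k (by omega) 0 (by omega)
    rw [descWeight_zero, diagSum_zero, diagSum_zero] at h
    obtain ⟨n, rfl⟩ : ∃ n, k = n + 2 := ⟨k - 2, by omega⟩
    have h₁ := Nat.fib_add_two (n := n)
    have h₂ := Nat.fib_add_two (n := n + 1)
    have h₃ := Nat.fib_add_two (n := n + 2)
    simp only [Nat.add_sub_cancel, add_assoc, Nat.reduceAdd] at h h₁ h₂ h₃ ⊢
    omega
  refine ⟨hcard, fun k hk => ?_⟩
  rw [hcard k (by omega), hcard (k - 1) (by omega), hcard (k - 2) (by omega)]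
  obtain ⟨n, rfl⟩ : ∃ n, k = n + 2 := ⟨k - 2, by omega⟩
  have h := Nat.fib_add_two (n := n)
  rw [show n + 2 - 1 = n + 1 by omega, Nat.add_sub_cancel]
  omega
end
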